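/- Let (S, 𝒜, μ) be a finite measure space and let (u_n) be a sequence of measurable functions u_n : S → ℝ^m such that for every ε > 0 there exists N with μ{s ∈ S : u_n(s) ≠ u_m(s)} < ε for all n, m ≥ N (i.e. the sequence is Cauchy for the distance d₁(u, v) = μ{s : u(s) ≠ v(s)}). Then there exists a measurable function u : S → ℝ^m such that μ{s ∈ S : u_n(s) ≠ u(s)} → 0 as n → ∞. Moreover, if A₁ ⊆ ℝ^m is a nonempty closed set and every u_n takes values in A₁, then u can be chosen to take values in A₁. -/

import Mathlib

/-!
Choose indices `M j`, nondecreasing in `j`, such that the sequence `w j = u (M j)` has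
summable measures of its consecutive disagreement sets `{w j ≠ w (j + 1)}`.
Off the null set of points lying in infinitely many of these sets, `w` is eventually
constant, and its eventual value defines the limit `v`; on the null set put `v = u 0`. The measure
of `{v ≠ w k}` is at most the tail of the series, so `v` is the limit of `w`, hence of
the whole Cauchy sequence. Every value `v s` is literally one of the values `u n s`, so any
pointwise constraint satisfied by all the terms, such as lying in a given set, passes to `v`.
-/

open Filter Topology MeasureTheory ENNReal

/-- A Cauchy sequence for the disagreement distance has a measurable limit, each of whose values is
attained at the same point by some term of the sequence. -/
theorem exists_limit_eq_some_term
    {m : ℕ} {S : Type*} [MeasurableSpace S] (μ : Measure S)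
    (u : ℕ → S → EuclideanSpace ℝ (Fin m)) (hmeas : ∀ n, Measurable (u n))
    (hcauchy : ∀ ε : ℝ≥0∞, 0 < ε → ∃ N : ℕ, ∀ n ≥ N, ∀ k ≥ N,
      μ {s | u n s ≠ u k s} < ε) :
    ∃ v : S → EuclideanSpace ℝ (Fin m), Measurable v ∧ (∀ s, ∃ n, v s = u n s) ∧
      Tendsto (fun n => μ {s | u n s ≠ v s}) atTop (𝓝 0) := by
  obtain ⟨δ, hδpos, hδsum⟩ := ENNReal.exists_pos_sum_of_countable' one_ne_zero ℕ
  choose N hN using fun j => hcauchy (δ j) (hδpos j)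
  -- Partial sums make the indices monotone, so that `M j` and `M (j + 1)` are both at least `N j`.
  let M : ℕ → ℕ := fun j => ∑ i ∈ Finset.range (j + 1), N i
  have hM : ∀ j, N j ≤ M j := fun j =>
    Finset.single_le_sum (f := N) (fun _ _ => Nat.zero_le _) (Finset.self_mem_range_succ j)
  have hM' : ∀ j, N j ≤ M (j + 1) := fun j =>
    Finset.single_le_sum (f := N) (fun _ _ => Nat.zero_le _) (Finset.mem_range.2 (by omega))
  -- `C k` is the set where `u (M ·)` is constant from index `k` on.
  let C : ℕ → Set S := fun k => ⋂ i, {s | u (M (i + k)) s = u (M (i + k + 1)) s}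
  have hCmeas : ∀ k, MeasurableSet (C k) := fun k =>
    MeasurableSet.iInter fun i => measurableSet_eq_fun (hmeas _) (hmeas _)
  have hCconst : ∀ k s, s ∈ C k → ∀ i, u (M (i + k)) s = u (M k) s := by
    intro k s hs i
    induction i with
    | zero => simp
    | succ i ih =>
      rw [← ih, Nat.add_right_comm]
      exact (Set.mem_iInter.1 hs i).symm
  have hCagree : ∀ k l s, s ∈ C k → s ∈ C l → u (M k) s = u (M l) s := by
    intro k l s hk hl
    rw [← hCconst k s hk l, ← hCconst l s hl k, Nat.add_comm]
  have hCcompl : ∀ k, μ (C k)ᶜ ≤ ∑' i, δ (i + k) := by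
    intro k
    rw [Set.compl_iInter]
    refine (measure_iUnion_le _).trans (ENNReal.tsum_le_tsum fun i => ?_)
    exact (hN (i + k) _ (hM _) _ (hM' _)).le
  let t : Option ℕ → Set S := fun o => o.elim (⋃ k, C k)ᶜ C
  let g : Option ℕ → S → EuclideanSpace ℝ (Fin m) := fun o => o.elim (u 0) fun k => u (M k)
  obtain ⟨v, hv, hvt⟩ := exists_measurable_piecewise t
    (by
      rintro (_ | k)
      · exact (MeasurableSet.iUnion hCmeas).compl
      · exact hCmeas k)
    g
    (by
      rintro (_ | k)
      · exact hmeas 0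
      · exact hmeas _)
    (by
      rintro (_ | k) (_ | l) hkl s ⟨hs, hs'⟩
      · rfl
      · exact absurd (Set.mem_iUnion.2 ⟨l, hs'⟩) hs
      · exact absurd (Set.mem_iUnion.2 ⟨k, hs⟩) hs'
      · exact hCagree k l s hs hs')
  refine ⟨v, hv, fun s => ?_, ?_⟩
  · by_cases hs : s ∈ ⋃ k, C k
    · obtain ⟨k, hk⟩ := Set.mem_iUnion.1 hs
      exact ⟨M k, hvt (some k) hk⟩
    · exact ⟨0, hvt none hs⟩
  · have htail : Tendsto (fun k => δ k + ∑' i, δ (i + k)) atTop (𝓝 0) := by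
      have hne : ∑' i, δ i ≠ ∞ := (hδsum.trans one_lt_top).ne
      simpa using (ENNReal.tendsto_atTop_zero_of_tsum_ne_top hne).add
        (ENNReal.tendsto_sum_nat_add δ hne)
    rw [ENNReal.tendsto_atTop_zero] at htail ⊢
    intro ε hε
    obtain ⟨k, hk⟩ := htail ε hε
    refine ⟨N k, fun n hn => ?_⟩
    have hsub : {s | u n s ≠ v s} ⊆ {s | u n s ≠ u (M k) s} ∪ (C k)ᶜ := by
      intro s hs
      by_cases hsC : s ∈ C k
      · left
        have h : v s = u (M k) s := hvt (some k) hsC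
        rwa [Set.mem_ofPred_eq, ← h]
      · exact Or.inr hsC
    calc μ {s | u n s ≠ v s}
        ≤ μ {s | u n s ≠ u (M k) s} + μ (C k)ᶜ :=
          (measure_mono hsub).trans (measure_union_le _ _)
      _ ≤ δ k + ∑' i, δ (i + k) := add_le_add (hN k n hn _ (hM k)).le (hCcompl k)
      _ ≤ ε := hk k le_rfl

/-- Completeness of the space of measurable controls under the distance
`d₁(u,v) = μ {s | u s ≠ v s}` on a finite measure space: every Cauchy sequence
converges to a measurable limit, which may moreover be chosen with values in a
prescribed nonempty closed set if all the terms take values there. -/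
theorem controls_complete_for_disagreement_distance
    {m : ℕ} {S : Type*} [MeasurableSpace S] (μ : Measure S) [IsFiniteMeasure μ]
    (u : ℕ → S → EuclideanSpace ℝ (Fin m)) (hmeas : ∀ n, Measurable (u n))
    (hcauchy : ∀ ε : ℝ≥0∞, 0 < ε → ∃ N : ℕ, ∀ n ≥ N, ∀ k ≥ N,
      μ {s | u n s ≠ u k s} < ε) :
    (∃ v : S → EuclideanSpace ℝ (Fin m), Measurable v ∧
      Tendsto (fun n => μ {s | u n s ≠ v s}) atTop (𝓝 0)) ∧
    (∀ A₁ : Set (EuclideanSpace ℝ (Fin m)), A₁.Nonempty → IsClosed A₁ →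
      (∀ n s, u n s ∈ A₁) →
      ∃ v : S → EuclideanSpace ℝ (Fin m), Measurable v ∧ (∀ s, v s ∈ A₁) ∧
        Tendsto (fun n => μ {s | u n s ≠ v s}) atTop (𝓝 0)) := by
  obtain ⟨v, hv, hval, hlim⟩ := exists_limit_eq_some_term μ u hmeas hcauchy
  refine ⟨⟨v, hv, hlim⟩, fun A₁ _ _ hA => ⟨v, hv, fun s => ?_, hlim⟩⟩
  obtain ⟨n, hn⟩ := hval s
  exact hn ▸ hA n s
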